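/- arXiv:2210.15541 — 3 statements merged into one kernel-verified Lean document; each statement's English description precedes it below -/
import Mathlib

section
/- Fix naturals n, k with k ≥ 1, k dividing n, and n ≥ k². Then the union attention graph G* contains a Hamiltonian path: there exists a bijection γ : {0,…,n−1} → V such that for every 0 ≤ i ≤ n−2, the ordered pair (γ(i), γ(i+1)) is an edge of G*. -/
/-- The union attention graph `G*` on `{0,…,n-1}`: `(u,v)` is an edge iff
`u` and `v` lie in the same block (`b v = ⌊v·k/n⌋`), or `u` is a relay vertex
(`u ≥ n - k`), or `v` is a relay vertex. -/
def starEdge (n k : ℕ) (u v : Fin n) : Prop :=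
  u.val * k / n = v.val * k / n ∨ n - k ≤ u.val ∨ n - k ≤ v.val

/-!
Label every non-relay by its block and the `j`-th relay by `j`, and list the vertices by increasing
label, relays first among equal labels. When the label jumps between two consecutive non-relays,
the relay carrying the larger label would have to stand between them; hence consecutive non-relays
lie in the same block. The relay is there: if `1 ≤ k ≤ n`, then both the blocks and the `k` relays
are numbered below `k`; if `k = 0` or `k > n`, then `G*` is complete.
-/

section RelayKey

variable {ι V α : Type*} {c : V → α} {R : Set V}

/-- The sorting key of a vertex with respect to a labelling `c` and a set `R` of relays: vertices
are compared by label, and relays precede non-relays of the same label (`False < True` in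
`Prop`). -/
def relayKey (c : V → α) (R : Set V) (v : V) : α ×ₗ Prop :=
  toLex (c v, v ∉ R)

lemma relayKey_lt_of_label_lt [LT α] {u v : V} (h : c u < c v) :
    relayKey c R u < relayKey c R v :=
  Prod.Lex.toLex_lt_toLex.2 (.inl h)

lemma relayKey_lt_of_label_le [PartialOrder α] {u v : V} (h : c u ≤ c v) (hu : u ∈ R)
    (hv : v ∉ R) : relayKey c R u < relayKey c R v := by
  have hProp : (u ∉ R) < (v ∉ R) := lt_of_le_not_ge (fun _ => hv) fun h => h hv hu
  exact Prod.Lex.toLex_lt_toLex.2 (h.lt_or_eq.imp_right fun h => ⟨h, hProp⟩)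

lemma label_eq_of_covBy_of_monotone_relayKey [LinearOrder ι] [PartialOrder α] {γ : ι → V}
    (hγ : Function.Surjective γ) (hmono : Monotone (relayKey c R ∘ γ))
    (hR : ∀ u ∉ R, ∀ v ∉ R, c u < c v → ∃ w ∈ R, c w ∈ Set.Ioc (c u) (c v))
    {i j : ι} (hij : i ⋖ j) (hi : γ i ∉ R) (hj : γ j ∉ R) : c (γ i) = c (γ j) := by
  have hle : c (γ i) ≤ c (γ j) := Prod.Lex.monotone_fst_ofLex (hmono hij.le)
  refine hle.eq_of_not_lt fun hlt => ?_
  obtain ⟨w, hwR, hiw, hwj⟩ := hR _ hi _ hj hlt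
  obtain ⟨l, rfl⟩ := hγ w
  have hil : i < l := hmono.reflect_lt (relayKey_lt_of_label_lt hiw)
  have hlj : l < j := hmono.reflect_lt (relayKey_lt_of_label_le hwj hwR hj)
  exact hij.2 hil hlj

end RelayKey

/-- The label by which the vertices of `G*` are sorted: the index `j` of the relay `n - k + j`, and
the block of a non-relay. -/
def starLabel (n k : ℕ) (v : Fin n) : ℕ :=
  if n - k ≤ v.val then v.val - (n - k) else v.val * k / n

lemma starLabel_of_relay {n k : ℕ} {v : Fin n} (hv : n - k ≤ v.val) :
    starLabel n k v = v.val - (n - k) :=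
  if_pos hv

lemma starLabel_of_not_relay {n k : ℕ} {v : Fin n} (hv : ¬n - k ≤ v.val) :
    starLabel n k v = v.val * k / n :=
  if_neg hv

lemma starLabel_lt_of_not_relay {n k : ℕ} {v : Fin n} (hk : 0 < k) (hv : ¬n - k ≤ v.val) :
    starLabel n k v < k := by
  rw [starLabel_of_not_relay hv]
  exact Nat.div_lt_of_lt_mul (Nat.mul_lt_mul_of_pos_right v.isLt hk)

lemma exists_relay_starLabel_eq {n k j : ℕ} (hkn : k ≤ n) (hj : j < k) :
    ∃ w : Fin n, n - k ≤ w.val ∧ starLabel n k w = j := by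
  have hw : n - k ≤ n - k + j := Nat.le_add_right _ _
  exact ⟨⟨n - k + j, by omega⟩, hw, (starLabel_of_relay hw).trans (Nat.add_sub_cancel_left _ _)⟩

lemma exists_relay_starLabel_eq_of_pos {n k : ℕ} {v : Fin n} (hv : ¬n - k ≤ v.val)
    (hpos : 0 < starLabel n k v) :
    ∃ w : Fin n, n - k ≤ w.val ∧ starLabel n k w = starLabel n k v := by
  have hk : 0 < k := by
    refine Nat.pos_of_ne_zero ?_
    rintro rfl
    simp [starLabel_of_not_relay hv] at hpos
  exact exists_relay_starLabel_eq (by omega) (starLabel_lt_of_not_relay hk hv)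

theorem starGraph_hamiltonian_path_general (n k : ℕ) :
    ∃ γ : Fin n ≃ Fin n, ∀ (i : ℕ) (h : i + 1 < n),
      starEdge n k (γ ⟨i, by omega⟩) (γ ⟨i + 1, h⟩) := by
  let R : Set (Fin n) := {v | n - k ≤ v.val}
  let γ := Tuple.sort (relayKey (starLabel n k) R)
  refine ⟨γ, fun i h => ?_⟩
  by_cases hi : γ ⟨i, by omega⟩ ∈ R
  · exact .inr (.inl hi)
  by_cases hj : γ ⟨i + 1, h⟩ ∈ R
  · exact .inr (.inr hj)
  have hR : ∀ u ∉ R, ∀ v ∉ R, starLabel n k u < starLabel n k v →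
      ∃ w ∈ R, starLabel n k w ∈ Set.Ioc (starLabel n k u) (starLabel n k v) := by
    intro u _ v hv huv
    obtain ⟨w, hw, hwv⟩ := exists_relay_starLabel_eq_of_pos hv (Nat.zero_lt_of_lt huv)
    exact ⟨w, hw, huv.trans_eq hwv.symm, hwv.le⟩
  have hcov : (⟨i, by omega⟩ : Fin n) ⋖ ⟨i + 1, h⟩ := by simp
  have hlabel := label_eq_of_covBy_of_monotone_relayKey γ.surjective
    (Tuple.monotone_sort _) hR hcov hi hj
  rw [starLabel_of_not_relay hi, starLabel_of_not_relay hj] at hlabel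
  exact .inl hlabel

/-- For `k ≥ 1`, `k ∣ n`, `n ≥ k²`, the union attention graph `G*` contains a
Hamiltonian path: a bijection `γ : {0,…,n-1} → V` with `(γ i, γ (i+1))` an edge
for all `0 ≤ i ≤ n-2`. -/
theorem starGraph_hamiltonian_path (n k : ℕ) (hk : 1 ≤ k) (hkn : k ∣ n)
    (hnk : k ^ 2 ≤ n) :
    ∃ γ : Fin n ≃ Fin n, ∀ (i : ℕ) (h : i + 1 < n),
      starEdge n k (γ ⟨i, by omega⟩) (γ ⟨i + 1, h⟩) :=
  starGraph_hamiltonian_path_general n k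
end

section
/- Fix naturals n, k with k ≥ 1, k dividing n, and n ≥ k². Then the union attention graph G* simultaneously satisfies: (1) every vertex has a self-loop, i.e., (v,v) is an edge for all v ∈ V; (2) G* contains a Hamiltonian path, i.e., a bijection γ : {0,…,n−1} → V with (γ(i), γ(i+1)) an edge for all 0 ≤ i ≤ n−2; and (3) for every ordered pair of vertices (u,v) there is a directed path from u to v of length at most 2. -/
/-! Let each relay close one block: sort the vertices by block, with the `j`-th relay placed right
after the other vertices of block `j`. Passing from one block to the next then always leaves from a
relay, whichever block that relay itself belongs to, and there are as many relays as blocks. If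
`n < k` every vertex is a relay, and if `k = 0` all vertices share block `0`: the graph is then
complete. -/

/-- The segment of the Hamiltonian path on which `v` is visited: a non-relay is visited with its
own block, and the `j`-th relay `n - k + j` is visited with block `j`. -/
def pathSegment (n k : ℕ) (v : Fin n) : ℕ :=
  if n - k ≤ v.val then v.val - (n - k) else v.val * k / n

lemma exists_equiv_fin_monotone {V β : Type*} [Fintype V] [LinearOrder β] {n : ℕ}
    (hn : Fintype.card V = n) (f : V → β) : ∃ γ : Fin n ≃ V, Monotone (f ∘ γ) := by
  let e := (Fintype.equivFinOfCardEq hn).symm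
  exact ⟨(Tuple.sort (f ∘ e)).trans e, Tuple.monotone_sort (f ∘ e)⟩

lemma exists_equiv_fin_covBy_eq_or_mem {V β : Type*} [Fintype V] {n : ℕ}
    (hn : Fintype.card V = n) (c : V → β) (R : Set V)
    (hR : ∀ v ∉ R, ∃ w ∈ R, c w = c v) :
    ∃ γ : Fin n ≃ V, ∀ i j, i ⋖ j → c (γ i) = c (γ j) ∨ γ i ∈ R := by
  obtain ⟨_, _⟩ := exists_wellFoundedLT β
  let key : V → β ×ₗ Prop := fun v => toLex (c v, v ∈ R)
  obtain ⟨γ, hγ⟩ := exists_equiv_fin_monotone hn key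
  refine ⟨γ, fun i j hij => ?_⟩
  by_contra! ⟨hc, hi⟩
  obtain ⟨w, hwR, hwc⟩ := hR _ hi
  obtain ⟨l, rfl⟩ := γ.surjective w
  have hlt : c (γ i) < c (γ j) := (Prod.Lex.monotone_fst _ _ (hγ hij.le)).lt_of_ne hc
  have hil : key (γ i) < key (γ l) :=
    Prod.Lex.toLex_lt_toLex.mpr <| .inr ⟨hwc.symm, by simp [hi, hwR, lt_iff_le_not_ge]⟩
  have hlj : key (γ l) < key (γ j) :=
    Prod.Lex.toLex_lt_toLex.mpr <| .inl <| hwc.trans_lt hlt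
  exact hij.2 (hγ.reflect_lt hil) (hγ.reflect_lt hlj)

lemma starEdge_zero (n : ℕ) (u v : Fin n) : starEdge n 0 u v :=
  .inl <| by rw [mul_zero, mul_zero]

lemma exists_relay_pathSegment_eq {n k : ℕ} (hk : 0 < k) {v : Fin n} (hv : ¬ n - k ≤ v.val) :
    ∃ w : Fin n, n - k ≤ w.val ∧ pathSegment n k w = pathSegment n k v := by
  have hb : v.val * k / n < k :=
    Nat.div_lt_of_lt_mul <| Nat.mul_lt_mul_of_pos_right v.isLt hk
  refine ⟨⟨n - k + v.val * k / n, by omega⟩, Nat.le_add_right _ _, ?_⟩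
  rw [pathSegment, pathSegment, if_pos (Nat.le_add_right _ _), if_neg hv, Nat.add_sub_cancel_left]

lemma starEdge_of_pathSegment_eq {n k : ℕ} {u v : Fin n}
    (h : pathSegment n k u = pathSegment n k v) : starEdge n k u v := by
  by_cases hu : n - k ≤ u.val
  · exact .inr (.inl hu)
  by_cases hv : n - k ≤ v.val
  · exact .inr (.inr hv)
  rw [pathSegment, pathSegment, if_neg hu, if_neg hv] at h
  exact .inl h

lemma exists_hamiltonianPath_starEdge (n k : ℕ) :
    ∃ γ : Fin n ≃ Fin n, ∀ i j, i ⋖ j → starEdge n k (γ i) (γ j) := by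
  obtain rfl | hk := k.eq_zero_or_pos
  · exact ⟨.refl _, fun i j _ => starEdge_zero n i j⟩
  obtain ⟨γ, hγ⟩ := exists_equiv_fin_covBy_eq_or_mem (Fintype.card_fin n) (pathSegment n k)
    {v | n - k ≤ v.val} (fun _ hv => exists_relay_pathSegment_eq hk hv)
  exact ⟨γ, fun i j hij => (hγ i j hij).elim starEdge_of_pathSegment_eq (.inr ∘ .inl)⟩

lemma exists_starEdge_and_starEdge {n k : ℕ} (u v : Fin n) :
    ∃ w : Fin n, starEdge n k u w ∧ starEdge n k w v := by
  obtain rfl | hk := k.eq_zero_or_pos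
  · exact ⟨u, starEdge_zero n u u, starEdge_zero n u v⟩
  have hn : 0 < n := u.pos
  have hlast : n - k ≤ n - 1 := Nat.sub_le_sub_left hk n
  exact ⟨⟨n - 1, Nat.sub_one_lt_of_lt hn⟩, .inr (.inr hlast), .inr (.inl hlast)⟩

theorem starGraph_assumption_one_general (n k : ℕ) :
    (∀ v : Fin n, starEdge n k v v) ∧
      (∃ γ : Fin n ≃ Fin n, ∀ (i : ℕ) (h : i + 1 < n),
        starEdge n k (γ ⟨i, by omega⟩) (γ ⟨i + 1, h⟩)) ∧
      (∀ u v : Fin n, ∃ w : Fin n, starEdge n k u w ∧ starEdge n k w v) := by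
  obtain ⟨γ, hγ⟩ := exists_hamiltonianPath_starEdge n k
  refine ⟨fun _ => .inl rfl, ⟨γ, fun i h => hγ _ _ ?_⟩, exists_starEdge_and_starEdge⟩
  exact Fin.covBy_iff.mpr (Order.covBy_add_one i)

/-- For `k ≥ 1`, `k ∣ n`, `n ≥ k²`, the union attention graph `G*` satisfies the
three conditions of Assumption 1: (1) every vertex has a self-loop; (2) `G*`
contains a Hamiltonian path; (3) every ordered pair of vertices is joined by a
directed path of length at most 2. -/
theorem starGraph_assumption_one (n k : ℕ) (hk : 1 ≤ k) (hkn : k ∣ n)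
    (hnk : k ^ 2 ≤ n) :
    (∀ v : Fin n, starEdge n k v v) ∧
      (∃ γ : Fin n ≃ Fin n, ∀ (i : ℕ) (h : i + 1 < n),
        starEdge n k (γ ⟨i, by omega⟩) (γ ⟨i + 1, h⟩)) ∧
      (∀ u v : Fin n, ∃ w : Fin n, starEdge n k u w ∧ starEdge n k w v) :=
  starGraph_assumption_one_general n k
end

section
/- Let (I,J) be a pair of random indices in {1,…,n}² drawn by the fastRG edge-sampling procedure. Then for all i, j, the joint law satisfies P(I = i, J = j) = (Y·B·Z^T)_{i,j} / λ; in particular, the marginal distribution of a single sampled edge is proportional to the SBM edge-probability matrix Y·B·Z^T. -/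
open Matrix MeasureTheory

/-!
A random variable on a finite set whose atoms have mass at most `p a`, for a probability mass
function `p`, has atoms of mass exactly `p a`, since the atoms cover a space of mass `1 = ∑ p a`.
This takes only subadditivity, which holds for non-measurable sets too. Conditioning on the cluster
pair bounds the mass of `(I, J) = (i, j)` by the mixture of the conditional laws; in that
mixture the column sums of `Y` and `Z` cancel, leaving `(Y B Zᵀ) i j / λ`.
-/

section Measure

variable {Ω α β : Type*} [MeasurableSpace Ω] {μ : Measure Ω} [IsProbabilityMeasure μ]
  [Countable α] {X : Ω → α}

lemma measure_eq_pmf_of_forall_le {p : PMF α} (h : ∀ a, μ {ω | X ω = a} ≤ p a) (a : α) :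
    μ {ω | X ω = a} = p a := by
  have hcover : ⋃ a, {ω | X ω = a} = Set.univ := by ext; simp
  have htotal : 1 ≤ ∑' a, μ {ω | X ω = a} := by
    simpa only [hcover, measure_univ] using measure_iUnion_le (μ := μ) fun a => {ω | X ω = a}
  refine (h a).antisymm <| le_of_not_gt fun hlt => ?_
  have hfinite : ∑' a, μ {ω | X ω = a} ≠ ⊤ :=
    ne_top_of_le_ne_top p.tsum_coe_ne_top (ENNReal.tsum_le_tsum h)
  have hlt_one := ENNReal.tsum_lt_tsum hfinite h hlt
  rw [p.tsum_coe] at hlt_one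
  exact hlt_one.not_ge htotal

lemma measure_eq_pmf_bind [Countable β] {W : Ω → β} {q : PMF β} {κ : β → PMF α}
    (h : ∀ a b, μ {ω | X ω = a ∧ W ω = b} = q b * κ b a) (a : α) :
    μ {ω | X ω = a} = q.bind κ a := by
  refine measure_eq_pmf_of_forall_le (fun a => ?_) a
  have hcover : {ω | X ω = a} = ⋃ b, {ω | X ω = a ∧ W ω = b} := by ext; simp
  calc μ {ω | X ω = a}
      ≤ ∑' b, μ {ω | X ω = a ∧ W ω = b} := hcover ▸ measure_iUnion_le _
    _ = q.bind κ a := by simp only [h, PMF.bind_apply]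

end Measure

/-- The product of two probability mass functions, i.e. the law of an independent pair. -/
noncomputable def prodPMF {α β : Type*} (p : PMF α) (q : PMF β) : PMF (α × β) :=
  p.bind fun a => q.map (Prod.mk a)

lemma prodPMF_apply {α β : Type*} (p : PMF α) (q : PMF β) (a : α) (b : β) :
    prodPMF p q (a, b) = p a * q b := by
  classical
  have hslice (a' : α) : q.map (Prod.mk a') (a, b) = if a' = a then q b else 0 := by
    by_cases ha : a' = a <;> simp [PMF.map_apply, ha, eq_comm (a := a)]
  simp [prodPMF, PMF.bind_apply, hslice]

/-- The probability mass function on a finite type proportional to the weights `w`. -/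
noncomputable def weightedPMF {α : Type*} [Fintype α] (w : α → ℝ) (hw : ∀ a, 0 ≤ w a)
    (hpos : 0 < ∑ a, w a) : PMF α :=
  PMF.ofFintype (fun a => ENNReal.ofReal (w a / ∑ b, w b)) <| by
    rw [← ENNReal.ofReal_sum_of_nonneg fun a _ => div_nonneg (hw a) hpos.le, ← Finset.sum_div,
      div_self hpos.ne', ENNReal.ofReal_one]

lemma weightedPMF_apply {α : Type*} [Fintype α] (w : α → ℝ) (hw : ∀ a, 0 ≤ w a)
    (hpos : 0 < ∑ a, w a) (a : α) :
    weightedPMF w hw hpos a = ENNReal.ofReal (w a / ∑ b, w b) :=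
  rfl

lemma mul_mul_transpose_apply_eq_sum_prod {ι ι' κ κ' R : Type*} [Fintype κ] [Fintype κ']
    [NonUnitalNonAssocSemiring R] (Y : Matrix ι κ R) (B : Matrix κ κ' R) (Z : Matrix ι' κ' R)
    (i : ι) (j : ι') :
    (Y * B * Zᵀ) i j = ∑ q : κ × κ', Y i q.1 * B q.1 q.2 * Z j q.2 := by
  simp only [mul_apply, transpose_apply, Finset.sum_mul, Fintype.sum_prod_type_right]

section Sampler

variable {ι ι' κ κ' : Type*} [Fintype ι] [Fintype ι'] {Y : Matrix ι κ ℝ} {B : Matrix κ κ' ℝ}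
  {Z : Matrix ι' κ' ℝ}

/-- The unnormalised probability `cY u * B u v * cZ v` of the cluster pair `(u, v)`, where `cY` and
`cZ` are the column sums of `Y` and `Z`. -/
def clusterWeight (Y : Matrix ι κ ℝ) (B : Matrix κ κ' ℝ) (Z : Matrix ι' κ' ℝ) (q : κ × κ') : ℝ :=
  (∑ i, Y i q.1) * B q.1 q.2 * ∑ j, Z j q.2

lemma clusterWeight_nonneg (hY : ∀ i u, 0 ≤ Y i u) (hB : ∀ u v, 0 ≤ B u v)
    (hZ : ∀ j v, 0 ≤ Z j v) (q : κ × κ') : 0 ≤ clusterWeight Y B Z q :=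
  mul_nonneg (mul_nonneg (Finset.sum_nonneg fun i _ => hY i q.1) (hB q.1 q.2))
    (Finset.sum_nonneg fun j _ => hZ j q.2)

variable [Fintype κ] [Fintype κ']

/-- The law of one edge drawn by fastRG: a cluster pair `(u, v)` is drawn first, then, independently
of each other, a source from column `u` of `Y` and a destination from column `v` of `Z`. -/
noncomputable def fastRGEdgePMF (hY : ∀ i u, 0 ≤ Y i u) (hB : ∀ u v, 0 ≤ B u v)
    (hZ : ∀ j v, 0 ≤ Z j v) (hcY : ∀ u, 0 < ∑ i, Y i u) (hcZ : ∀ v, 0 < ∑ j, Z j v)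
    (hlam : 0 < ∑ q, clusterWeight Y B Z q) : PMF (ι × ι') :=
  (weightedPMF (clusterWeight Y B Z) (clusterWeight_nonneg hY hB hZ) hlam).bind fun q =>
    prodPMF (weightedPMF (Y · q.1) (hY · q.1) (hcY q.1))
      (weightedPMF (Z · q.2) (hZ · q.2) (hcZ q.2))

lemma fastRGEdgePMF_apply (hY : ∀ i u, 0 ≤ Y i u) (hB : ∀ u v, 0 ≤ B u v)
    (hZ : ∀ j v, 0 ≤ Z j v) (hcY : ∀ u, 0 < ∑ i, Y i u) (hcZ : ∀ v, 0 < ∑ j, Z j v)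
    (hlam : 0 < ∑ q, clusterWeight Y B Z q) (i : ι) (j : ι') :
    fastRGEdgePMF hY hB hZ hcY hcZ hlam (i, j) =
      ENNReal.ofReal ((Y * B * Zᵀ) i j / ∑ q, clusterWeight Y B Z q) := by
  set lam := ∑ q, clusterWeight Y B Z q
  have hcancel (q : κ × κ') :
      clusterWeight Y B Z q / lam * (Y i q.1 / (∑ i, Y i q.1) * (Z j q.2 / ∑ j, Z j q.2)) =
        Y i q.1 * B q.1 q.2 * Z j q.2 / lam := by
    have hY_ne := (hcY q.1).ne'
    have hZ_ne := (hcZ q.2).ne'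
    rw [clusterWeight]
    field_simp
  have hnonneg (q : κ × κ') : 0 ≤ Y i q.1 * B q.1 q.2 * Z j q.2 / lam :=
    div_nonneg (mul_nonneg (mul_nonneg (hY i q.1) (hB q.1 q.2)) (hZ j q.2)) hlam.le
  calc fastRGEdgePMF hY hB hZ hcY hcZ hlam (i, j)
      = ∑ q : κ × κ', ENNReal.ofReal (Y i q.1 * B q.1 q.2 * Z j q.2 / lam) := by
        rw [fastRGEdgePMF, PMF.bind_apply, tsum_fintype]
        refine Finset.sum_congr rfl fun q _ => ?_
        rw [prodPMF_apply, weightedPMF_apply, weightedPMF_apply, weightedPMF_apply,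
          ← ENNReal.ofReal_mul (div_nonneg (hY i q.1) (hcY q.1).le),
          ← ENNReal.ofReal_mul (div_nonneg (clusterWeight_nonneg hY hB hZ q) hlam.le), hcancel]
    _ = ENNReal.ofReal ((Y * B * Zᵀ) i j / lam) := by
        rw [← ENNReal.ofReal_sum_of_nonneg fun q _ => hnonneg q, ← Finset.sum_div,
          mul_mul_transpose_apply_eq_sum_prod]

end Sampler

theorem fastRG_single_edge_law_general
    {Ω ι ι' κ κ' : Type*} [MeasurableSpace Ω] (μ : Measure Ω) [IsProbabilityMeasure μ]
    [Fintype ι] [Fintype ι'] [Fintype κ] [Fintype κ']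
    (Y : Matrix ι κ ℝ) (Z : Matrix ι' κ' ℝ) (B : Matrix κ κ' ℝ)
    (hY : ∀ i u, 0 ≤ Y i u) (hZ : ∀ j v, 0 ≤ Z j v) (hB : ∀ u v, 0 ≤ B u v)
    (cY : κ → ℝ) (cZ : κ' → ℝ)
    (hcY : ∀ u, cY u = ∑ i, Y i u) (hcZ : ∀ v, cZ v = ∑ j, Z j v)
    (hcYpos : ∀ u, 0 < cY u) (hcZpos : ∀ v, 0 < cZ v)
    (lam : ℝ) (hlam : lam = ∑ u, ∑ v, cY u * B u v * cZ v) (hlampos : 0 < lam)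
    (U : Ω → κ) (V : Ω → κ') (I : Ω → ι) (J : Ω → ι')
    (hUV : ∀ u v, μ {ω | U ω = u ∧ V ω = v} = ENNReal.ofReal (cY u * B u v * cZ v / lam))
    (hIJ : ∀ i j u v, μ {ω | I ω = i ∧ J ω = j ∧ U ω = u ∧ V ω = v} =
      μ {ω | U ω = u ∧ V ω = v} * ENNReal.ofReal (Y i u / cY u) * ENNReal.ofReal (Z j v / cZ v))
    (i : ι) (j : ι') :
    μ {ω | I ω = i ∧ J ω = j} = ENNReal.ofReal ((Y * B * Zᵀ) i j / lam) := by
  obtain rfl : cY = fun u => ∑ i, Y i u := funext hcY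
  obtain rfl : cZ = fun v => ∑ j, Z j v := funext hcZ
  obtain rfl : lam = ∑ q, clusterWeight Y B Z q := by rw [hlam, Fintype.sum_prod_type]; rfl
  calc μ {ω | I ω = i ∧ J ω = j}
      = μ {ω | (I ω, J ω) = (i, j)} := by simp only [Prod.mk.injEq]
    _ = fastRGEdgePMF hY hB hZ hcYpos hcZpos hlampos (i, j) := by
        refine measure_eq_pmf_bind (W := fun ω => (U ω, V ω)) (fun ⟨i, j⟩ ⟨u, v⟩ => ?_) (i, j)
        simp only [Prod.mk.injEq, and_assoc]
        rw [hIJ, hUV, mul_assoc, prodPMF_apply]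
        rfl
    _ = ENNReal.ofReal ((Y * B * Zᵀ) i j / ∑ q, clusterWeight Y B Z q) :=
        fastRGEdgePMF_apply ..

/-- The joint law of a single edge `(I,J)` sampled by the fastRG procedure:
first a cluster pair `(U,V)` is drawn with probability `cY U * B U V * cZ V / λ`,
then, conditionally independently given `(U,V) = (u,v)`, a source `I` with
`P(I = i | U = u) = Y i u / cY u` and a destination `J` with
`P(J = j | V = v) = Z j v / cZ v`. Then `P(I = i, J = j) = (Y B Zᵀ)_{i,j} / λ`. -/
theorem fastRG_single_edge_law
    {Ω : Type*} [MeasurableSpace Ω] (μ : Measure Ω) [IsProbabilityMeasure μ]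
    (n k : ℕ) (Y Z : Matrix (Fin n) (Fin k) ℝ) (B : Matrix (Fin k) (Fin k) ℝ)
    (hY : ∀ i u, 0 ≤ Y i u) (hZ : ∀ j v, 0 ≤ Z j v) (hB : ∀ u v, 0 ≤ B u v)
    (cY cZ : Fin k → ℝ)
    (hcY : ∀ u, cY u = ∑ i, Y i u) (hcZ : ∀ v, cZ v = ∑ j, Z j v)
    (hcYpos : ∀ u, 0 < cY u) (hcZpos : ∀ v, 0 < cZ v)
    (lam : ℝ) (hlam : lam = ∑ u, ∑ v, cY u * B u v * cZ v) (hlampos : 0 < lam)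
    (U V : Ω → Fin k) (I J : Ω → Fin n)
    (hUV : ∀ u v, μ {ω | U ω = u ∧ V ω = v} =
      ENNReal.ofReal (cY u * B u v * cZ v / lam))
    (hIJ : ∀ (i j : Fin n) (u v : Fin k),
      μ {ω | I ω = i ∧ J ω = j ∧ U ω = u ∧ V ω = v} =
        μ {ω | U ω = u ∧ V ω = v} * ENNReal.ofReal (Y i u / cY u) *
          ENNReal.ofReal (Z j v / cZ v)) :
    ∀ (i j : Fin n),
      μ {ω | I ω = i ∧ J ω = j} = ENNReal.ofReal ((Y * B * Zᵀ) i j / lam) :=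
  fastRG_single_edge_law_general μ Y Z B hY hZ hB cY cZ hcY hcZ hcYpos hcZpos lam hlam hlampos
    U V I J hUV hIJ
end
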